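/- arXiv:1807.03650 — 3 statements merged into one kernel-verified Lean document; each statement's English description precedes it below -/
import Mathlib

section
/- In the line model with M layers, for every n ≥ 1, the probability Q_{0^{(n)}} that all n links e_1,…,e_n are inactive equals [1 − n q² + P_{n+1}(q)]^M, where 0^{(n)} is the all-zeros configuration of length n. -/
open MeasureTheory ProbabilityTheory Finset

/-- Bernoulli measure on `Bool` with success probability `p`. -/
noncomputable def bern (p : ℝ) : Measure Bool :=
  ENNReal.ofReal p • Measure.dirac true + ENNReal.ofReal (1 - p) • Measure.dirac false

/-- The line model with `M` layers, `n` links (hence `n+1` nodes), node activation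
probability `q`: every node is active on every layer independently with probability `q`. -/
noncomputable def lineμ (M n : ℕ) (q : ℝ) : Measure ((Fin M × Fin (n + 1)) → Bool) :=
  Measure.pi fun _ => bern q

/-- Link `e_{j+1} = (j+1, j+2)` (1-based) is active: some layer has both endpoints active. -/
def act {M n : ℕ} (j : Fin n) (ω : (Fin M × Fin (n + 1)) → Bool) : Prop :=
  ∃ m : Fin M, ω (m, j.castSucc) = true ∧ ω (m, j.succ) = true

/-- The event that the links are in configuration `x` (1-based: link `e_j` is active
iff `x j = 1`). -/
def cfg {M n : ℕ} (x : ℕ → ℝ) : Set ((Fin M × Fin (n + 1)) → Bool) :=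
  {ω | ∀ j : Fin n, (act j ω ↔ x (j.val + 1) = 1)}

/-- The event that the set of layers on which the last node `n+1` is active equals `A`. -/
def lastIn {M n : ℕ} (A : Finset (Fin M)) : Set ((Fin M × Fin (n + 1)) → Bool) :=
  {ω | ∀ k : Fin M, (ω (k, Fin.last n) = true ↔ k ∈ A)}

/-- `Q_{x^{(n)}}(m)`: conditional probability of configuration `x` given that the set of
layers on which node `n+1` is active equals the fixed set `A` (of cardinality `m`). -/
noncomputable def Qcond (M n : ℕ) (q : ℝ) (x : ℕ → ℝ) (A : Finset (Fin M)) : ℝ :=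
  (ProbabilityTheory.cond (lineμ M n q) (lastIn A) (cfg x)).toReal

/-- The polynomials `P_k(q)`: `P₁ = P₂ = 0`,
`P_k = (1−q) P_{k−1} + q(1−q) P_{k−2} + q³ + (k−3) q⁴` for `k ≥ 3`. -/
noncomputable def Ppoly (q : ℝ) : ℕ → ℝ
  | 0 => 0
  | 1 => 0
  | 2 => 0
  | (k + 3) => (1 - q) * Ppoly q (k + 2) + q * (1 - q) * Ppoly q (k + 1) + q ^ 3 + (k : ℝ) * q ^ 4

/-- `Q_{x^{(n)}}`: unconditional probability of configuration `x`. -/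
noncomputable def Qabs (M n : ℕ) (q : ℝ) (x : ℕ → ℝ) : ℝ :=
  ((lineμ M n q) (cfg x)).toReal

/-- The probability that a Bernoulli variable with success probability `q` takes the value `b`. -/
noncomputable def bernWeight (q : ℝ) (b : Bool) : ℝ :=
  if b then q else 1 - q

/-- No two consecutive nodes are both active. -/
def NoAdjacent {n : ℕ} (σ : Fin (n + 1) → Bool) : Prop :=
  ∀ j : Fin n, ¬(σ j.castSucc = true ∧ σ j.succ = true)

instance decidablePredNoAdjacent {n : ℕ} : DecidablePred (NoAdjacent (n := n)) :=
  fun σ => inferInstanceAs (Decidable (∀ j : Fin n, ¬(σ j.castSucc = true ∧ σ j.succ = true)))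

/-- The probability that, in a row of `n + 1` nodes on one layer, no two consecutive nodes are both
active, given that the first node is in state `b`. -/
noncomputable def noAdjacentProb (q : ℝ) (n : ℕ) (b : Bool) : ℝ :=
  ∑ σ : Fin n → Bool, if NoAdjacent (Fin.cons b σ : Fin (n + 1) → Bool) then
    ∏ i, bernWeight q (σ i) else 0

theorem noAdjacent_cons_cons {n : ℕ} (b c : Bool) (τ : Fin n → Bool) :
    NoAdjacent (Fin.cons b (Fin.cons c τ : Fin (n + 1) → Bool) : Fin (n + 2) → Bool) ↔
      ¬(b = true ∧ c = true) ∧ NoAdjacent (Fin.cons c τ : Fin (n + 1) → Bool) := by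
  unfold NoAdjacent
  rw [Fin.forall_fin_succ]
  simp

theorem noAdjacent_false_cons {n : ℕ} (σ : Fin (n + 1) → Bool) :
    NoAdjacent (Fin.cons false σ : Fin (n + 2) → Bool) ↔ NoAdjacent σ := by
  rw [← Fin.cons_self_tail σ, noAdjacent_cons_cons]
  simp

theorem noAdjacentProb_zero (q : ℝ) (b : Bool) : noAdjacentProb q 0 b = 1 := by
  simp [noAdjacentProb, NoAdjacent]

theorem noAdjacentProb_succ (q : ℝ) (n : ℕ) (b : Bool) :
    noAdjacentProb q (n + 1) b =
      (if b then 0 else q * noAdjacentProb q n true) + (1 - q) * noAdjacentProb q n false := by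
  have h := (Fin.consEquiv fun _ : Fin (n + 1) => Bool).sum_comp
    fun σ => if NoAdjacent (Fin.cons b σ : Fin (n + 2) → Bool) then
      ∏ i, bernWeight q (σ i) else 0
  rw [noAdjacentProb, ← h, Fintype.sum_prod_type]
  cases b <;>
    simp [Fin.consEquiv, noAdjacent_cons_cons, Fin.prod_univ_succ, bernWeight,
      noAdjacentProb, Finset.mul_sum]

theorem noAdjacentProb_add_two (q : ℝ) (n : ℕ) :
    noAdjacentProb q (n + 2) false =
      (1 - q) * noAdjacentProb q (n + 1) false + q * (1 - q) * noAdjacentProb q n false := by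
  rw [noAdjacentProb_succ q (n + 1) false, noAdjacentProb_succ q n true]
  simp
  ring

theorem noAdjacentProb_succ_false_eq (q : ℝ) (n : ℕ) :
    noAdjacentProb q (n + 1) false = 1 - (n : ℝ) * q ^ 2 + Ppoly q (n + 1) := by
  induction n using Nat.twoStepInduction with
  | zero => simp [noAdjacentProb_succ, noAdjacentProb_zero, Ppoly]
  | one => simp [noAdjacentProb_succ, noAdjacentProb_zero, Ppoly]; ring
  | more n ih ih' =>
    rw [noAdjacentProb_add_two, ih, ih', Ppoly]
    push_cast
    ring

theorem isProbabilityMeasure_bern {q : ℝ} (hq : q ∈ Set.Icc (0 : ℝ) 1) :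
    IsProbabilityMeasure (bern q) := by
  constructor
  simp [bern, ← ENNReal.ofReal_add hq.1 (sub_nonneg.2 hq.2)]

theorem bern_real_singleton {q : ℝ} (hq : q ∈ Set.Icc (0 : ℝ) 1) (b : Bool) :
    (bern q).real {b} = bernWeight q b := by
  cases b <;> simp [bern, bernWeight, Measure.real, hq.1, hq.2]

theorem pi_bern_real {ι : Type*} [Fintype ι] [DecidableEq ι] {q : ℝ} (hq : q ∈ Set.Icc (0 : ℝ) 1)
    (s : Set (ι → Bool)) [DecidablePred (· ∈ s)] :
    (Measure.pi fun _ : ι => bern q).real s =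
      ∑ ω : ι → Bool, if ω ∈ s then ∏ i, bernWeight q (ω i) else 0 := by
  have := isProbabilityMeasure_bern hq
  have hs : s = ((univ.filter (· ∈ s) : Finset (ι → Bool)) : Set (ι → Bool)) := by ext; simp
  conv_lhs => rw [hs]
  rw [← sum_measureReal_singleton, Finset.sum_filter]
  refine Finset.sum_congr rfl fun ω _ => ?_
  simp [Measure.real, Measure.pi_singleton, ENNReal.toReal_prod,
    ← bern_real_singleton hq]

theorem mem_cfg_zero {M n : ℕ} (ω : Fin M × Fin (n + 1) → Bool) :
    ω ∈ cfg (fun _ => 0) ↔ ∀ m, NoAdjacent fun i => ω (m, i) := by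
  simp only [cfg, act, NoAdjacent, Set.mem_ofPred_eq, zero_ne_one, iff_false, not_exists]
  exact forall_comm

/-- the probability that all `n` links are inactive equals
`[1 − n q² + P_{n+1}(q)]^M`. -/
theorem stmt5 (M : ℕ) (hM : 1 ≤ M) (q : ℝ) (hq : q ∈ Set.Ioo (0 : ℝ) 1)
    (n : ℕ) (hn : 1 ≤ n) :
    Qabs M n q (fun _ => 0) = (1 - (n : ℝ) * q ^ 2 + Ppoly q (n + 1)) ^ M := by
  classical
  rw [← noAdjacentProb_succ_false_eq, noAdjacentProb, Fintype.sum_pow]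
  change (Measure.pi fun _ => bern q).real (cfg fun _ => 0) = _
  rw [pi_bern_real (Set.Ioo_subset_Icc_self hq),
    ← (Equiv.curry (Fin M) (Fin (n + 1)) Bool).sum_comp]
  refine Finset.sum_congr rfl fun ω _ => ?_
  simp only [mem_cfg_zero, noAdjacent_false_cons, Fintype.prod_prod_type]
  rw [Finset.prod_ite_zero]
  simp [Equiv.curry]
  rfl
end

section
/- In the line model with M layers, for every n ≥ 1 and every x^{(n)} = (x_1,…,x_n) ∈ {0,1}^n, the probability of configuration x^{(n)} satisfies Q_{x^{(n)}} = Σ_{j=0}^{n} h_j Q_{0^{(n−j)}} ∏_{l=j+1}^{n} ((1−x_l) − x_l), where Q_{0^{(0)}} = 1, Q_{0^{(k)}} = [1 − k q² + P_{k+1}(q)]^M for k ≥ 1, and empty products equal 1. -/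
open MeasureTheory ProbabilityTheory Finset

/-- The coefficients `h_j`: `h₀ = 1`, `h₁ = x₁`, and for `j ≥ 2`,
`h_j = x_j ∑_{r=0}^{j−1} [1−(j−1−r)q² + P_{j−r}(q)]^M h_r ∏_{l=r+1}^{j−1} ((1−x_l) − x_l)`. -/
noncomputable def hcoef (M : ℕ) (q : ℝ) (x : ℕ → ℝ) : ℕ → ℝ
  | 0 => 1
  | 1 => x 1
  | (j + 2) => x (j + 2) *
      ∑ r ∈ (Finset.range (j + 2)).attach,
        (1 - ((j : ℝ) + 1 - (r.1 : ℝ)) * q ^ 2 + Ppoly q (j + 2 - r.1)) ^ M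
          * hcoef M q x r.1
          * ∏ l ∈ Finset.Icc (r.1 + 1) (j + 1), ((1 - x l) - x l)
  termination_by j => j
  decreasing_by
    have := Finset.mem_range.mp r.2
    omega

/-- `Q_{0^{(k)}}`: `Q_{0^{(0)}} = 1` and `Q_{0^{(k)}} = [1 − k q² + P_{k+1}(q)]^M` for `k ≥ 1`. -/
noncomputable def Q0a (M : ℕ) (q : ℝ) : ℕ → ℝ
  | 0 => 1
  | (k + 1) => (1 - ((k : ℝ) + 1) * q ^ 2 + Ppoly q (k + 2)) ^ M

/-- The probability mass of `t` under the Bernoulli law with parameter `q`. -/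
def bernMass (q : ℝ) (t : Bool) : ℝ := if t then q else 1 - q

/-- The indicator that a node pair in states `s`, `t` on a single layer is not both active. -/
def notBoth (s t : Bool) : ℝ := if s = true ∧ t = true then 0 else 1

/-- The probability that a node is active exactly on the layers selected by `a`. -/
def colMass {M : ℕ} (q : ℝ) (a : Fin M → Bool) : ℝ := ∏ m, bernMass q (a m)

/-- The indicator that the link between two nodes with activity patterns `a`, `b` is inactive. -/
def colDisj {M : ℕ} (a b : Fin M → Bool) : ℝ := ∏ m, notBoth (a m) (b m)

/-- The indicator that a link has state `y`, extended affinely to real `y`. -/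
def linkWeight {M : ℕ} (y : ℝ) (a b : Fin M → Bool) : ℝ := y + ((1 - y) - y) * colDisj a b

/-- The probability that `n` links are in configuration `x` and the last node has pattern `b`. -/
def cfgVec (M : ℕ) (q : ℝ) (x : ℕ → ℝ) : ℕ → (Fin M → Bool) → ℝ
  | 0, b => colMass q b
  | n + 1, b => colMass q b * ∑ a, cfgVec M q x n a * linkWeight (x (n + 1)) a b

/-- The probability that `k` links are inactive on one layer and the last node has state `t`. -/
def zeroVec (q : ℝ) : ℕ → Bool → ℝ
  | 0, t => bernMass q t
  | k + 1, t => bernMass q t * ∑ s, zeroVec q k s * notBoth s t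

lemma zeroVec_succ_false_and_sum (q : ℝ) (k : ℕ) :
    zeroVec q (k + 1) false = (1 - q) * (1 - (k : ℝ) * q ^ 2 + Ppoly q (k + 1)) ∧
      zeroVec q (k + 1) true + zeroVec q (k + 1) false
        = 1 - ((k : ℝ) + 1) * q ^ 2 + Ppoly q (k + 2) := by
  induction k with
  | zero => constructor <;> simp [zeroVec, bernMass, notBoth, Ppoly]; ring
  | succ k ih =>
    obtain ⟨hf, hs⟩ := ih
    have hf' : zeroVec q (k + 2) false
        = (1 - q) * (zeroVec q (k + 1) true + zeroVec q (k + 1) false) := by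
      rw [zeroVec]; simp [bernMass, notBoth]
    have ht' : zeroVec q (k + 2) true = q * zeroVec q (k + 1) false := by
      rw [zeroVec]; simp [bernMass, notBoth]
    refine ⟨?_, ?_⟩
    · rw [hf', hs]; push_cast; ring
    · rw [hf', hs, ht', hf, Ppoly]; push_cast; ring

lemma sum_prod_eq_pow (M : ℕ) (f : Bool → ℝ) :
    ∑ b : Fin M → Bool, ∏ m, f (b m) = (∑ t, f t) ^ M := by
  have h := Finset.prod_univ_sum (fun _ : Fin M => (univ : Finset Bool)) (fun _ t => f t)
  rw [Fintype.piFinset_univ] at h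
  rw [← h]; simp

lemma sum_prod_zeroVec (M : ℕ) (q : ℝ) (k : ℕ) :
    ∑ b : Fin M → Bool, ∏ m, zeroVec q k (b m) = Q0a M q k := by
  rw [sum_prod_eq_pow]
  cases k with
  | zero => simp [zeroVec, bernMass, Q0a]
  | succ k => rw [Q0a, Fintype.sum_bool, (zeroVec_succ_false_and_sum q k).2]

lemma prod_zeroVec_succ (M : ℕ) (q : ℝ) (k : ℕ) (b : Fin M → Bool) :
    ∏ m, zeroVec q (k + 1) (b m)
      = colMass q b * ∑ a : Fin M → Bool, (∏ m, zeroVec q k (a m)) * colDisj a b := by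
  have h := Finset.prod_univ_sum (fun _ : Fin M => (univ : Finset Bool))
    (fun m s => zeroVec q k s * notBoth s (b m))
  rw [Fintype.piFinset_univ] at h
  simp_rw [zeroVec, colMass, colDisj, ← Finset.prod_mul_distrib, ← h]
  rw [Finset.prod_mul_distrib]

/-- The right-hand side of the configuration formula at length `n`. -/
noncomputable def cfgSum (M : ℕ) (q : ℝ) (x : ℕ → ℝ) (n : ℕ) : ℝ :=
  ∑ j ∈ range (n + 1), hcoef M q x j * Q0a M q (n - j) * ∏ l ∈ Icc (j + 1) n, ((1 - x l) - x l)

lemma hcoef_succ (M : ℕ) (q : ℝ) (x : ℕ → ℝ) (n : ℕ) :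
    hcoef M q x (n + 1) = x (n + 1) * cfgSum M q x n := by
  cases n with
  | zero => simp [cfgSum, hcoef, Q0a]
  | succ n =>
    rw [hcoef, cfgSum, Finset.sum_attach (range (n + 2)) (fun r =>
      (1 - ((n : ℝ) + 1 - (r : ℝ)) * q ^ 2 + Ppoly q (n + 2 - r)) ^ M * hcoef M q x r
        * ∏ l ∈ Icc (r + 1) (n + 1), ((1 - x l) - x l))]
    congr 1
    refine Finset.sum_congr rfl fun r hr => ?_
    have hr' : r ≤ n + 1 := by simpa [Nat.lt_succ_iff] using hr
    congr 1
    rw [mul_comm]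
    congr 1
    rcases Nat.lt_or_eq_of_le hr' with h | rfl
    · obtain ⟨k, rfl⟩ := Nat.exists_eq_add_of_le (Nat.lt_succ_iff.mp h)
      rw [show r + k + 1 - r = k + 1 by omega, show r + k + 2 - r = k + 2 by omega, Q0a]
      push_cast
      ring_nf
    · rw [show n + 2 - (n + 1) = 1 by omega]
      simp [Q0a, Ppoly]

lemma sum_zeroVec_expansion (M : ℕ) (q : ℝ) (x : ℕ → ℝ) (n : ℕ) :
    ∑ b : Fin M → Bool, ∑ j ∈ range (n + 1), hcoef M q x j * (∏ m, zeroVec q (n - j) (b m))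
      * ∏ l ∈ Icc (j + 1) n, ((1 - x l) - x l) = cfgSum M q x n := by
  rw [Finset.sum_comm]
  refine Finset.sum_congr rfl fun j _ => ?_
  rw [← Finset.sum_mul, ← Finset.mul_sum, sum_prod_zeroVec]

lemma cfgVec_eq_sum (M : ℕ) (q : ℝ) (x : ℕ → ℝ) (n : ℕ) (b : Fin M → Bool) :
    cfgVec M q x n b = ∑ j ∈ range (n + 1), hcoef M q x j * (∏ m, zeroVec q (n - j) (b m))
      * ∏ l ∈ Icc (j + 1) n, ((1 - x l) - x l) := by
  induction n generalizing b with
  | zero => simp [cfgVec, hcoef, zeroVec, colMass]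
  | succ n ih =>
    have hsum : ∑ a, cfgVec M q x n a = cfgSum M q x n := by
      simp_rw [ih, sum_zeroVec_expansion]
    have hdisj : colMass q b * ∑ a, cfgVec M q x n a * colDisj a b
        = ∑ j ∈ range (n + 1), hcoef M q x j * (∏ m, zeroVec q (n + 1 - j) (b m))
          * ∏ l ∈ Icc (j + 1) n, ((1 - x l) - x l) := by
      simp_rw [ih, Finset.sum_mul]
      rw [Finset.sum_comm, Finset.mul_sum]
      refine Finset.sum_congr rfl fun j hj => ?_
      have hj' : j ≤ n := by simpa [Nat.lt_succ_iff] using hj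
      rw [Nat.succ_sub hj', prod_zeroVec_succ, Finset.mul_sum, Finset.mul_sum, Finset.mul_sum,
        Finset.sum_mul]
      refine Finset.sum_congr rfl fun a _ => ?_
      ring
    have hsplit : cfgVec M q x (n + 1) b = x (n + 1) * (∑ a, cfgVec M q x n a) * colMass q b
        + ((1 - x (n + 1)) - x (n + 1)) * (colMass q b * ∑ a, cfgVec M q x n a * colDisj a b) := by
      simp only [cfgVec, linkWeight, Finset.mul_sum, Finset.sum_mul]
      rw [← Finset.sum_add_distrib]
      refine Finset.sum_congr rfl fun a _ => ?_
      ring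
    rw [hsplit, hsum, hdisj, ← hcoef_succ, Finset.sum_range_succ _ (n + 1), add_comm]
    congr 1
    · rw [Finset.mul_sum]
      refine Finset.sum_congr rfl fun j hj => ?_
      have hj' : j ≤ n := by simpa [Nat.lt_succ_iff] using hj
      rw [Finset.prod_Icc_succ_top (by omega)]
      ring
    · simp [zeroVec, colMass]

lemma sum_cfgVec (M : ℕ) (q : ℝ) (x : ℕ → ℝ) (n : ℕ) :
    ∑ b, cfgVec M q x n b = cfgSum M q x n := by
  simp_rw [cfgVec_eq_sum, sum_zeroVec_expansion]

lemma sum_columns_eq_sum_cfgVec (M : ℕ) (q : ℝ) (x : ℕ → ℝ) (n : ℕ) (F : (Fin M → Bool) → ℝ) :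
    ∑ c : Fin (n + 1) → Fin M → Bool, F (c (Fin.last n)) * ((∏ i, colMass q (c i))
        * ∏ j : Fin n, linkWeight (x (j.val + 1)) (c j.castSucc) (c j.succ))
      = ∑ b, F b * cfgVec M q x n b := by
  induction n generalizing F with
  | zero =>
    refine Fintype.sum_equiv (Equiv.funUnique (Fin 1) (Fin M → Bool)) _ _ fun c => ?_
    simp [cfgVec]
  | succ n ih =>
    rw [← (Fin.snocEquiv fun _ : Fin (n + 2) => Fin M → Bool).sum_comp, Fintype.sum_prod_type]
    refine Finset.sum_congr rfl fun b _ => ?_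
    have h := ih (fun a => F b * colMass q b * linkWeight (x (n + 1)) a b)
    calc _ = _ := Finset.sum_congr rfl fun c _ => ?_
      _ = _ := h
      _ = _ := ?_
    · rw [Fin.prod_univ_castSucc, Fin.prod_univ_castSucc (n := n) (f := fun j : Fin (n + 1) =>
        linkWeight (x (j.val + 1)) _ _)]
      simp only [Fin.snocEquiv_apply, Fin.snoc_last, Fin.snoc_castSucc, Fin.succ_last,
        ← Fin.castSucc_succ, Fin.val_castSucc, Fin.val_last]
      ring
    · rw [cfgVec, Finset.mul_sum, Finset.mul_sum]
      refine Finset.sum_congr rfl fun a _ => ?_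
      ring

lemma bern_singleton (q : ℝ) (t : Bool) :
    bern q {t} = ENNReal.ofReal (bernMass q t) := by
  cases t <;> simp [bern, bernMass]

lemma bernMass_nonneg {q : ℝ} (hq : q ∈ Set.Ioo (0 : ℝ) 1) (t : Bool) : 0 ≤ bernMass q t := by
  cases t <;> simp [bernMass, hq.1.le, hq.2.le]

lemma colDisj_eq {M : ℕ} (a b : Fin M → Bool) [Decidable (∃ m, a m = true ∧ b m = true)] :
    colDisj a b = if ∃ m, a m = true ∧ b m = true then 0 else 1 := by
  split_ifs with h
  · obtain ⟨m, hm⟩ := h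
    exact Finset.prod_eq_zero (mem_univ m) (if_pos hm)
  · exact Finset.prod_eq_one fun m _ => if_neg fun hm => h ⟨m, hm⟩

open Classical in
lemma linkWeight_eq {M : ℕ} {y : ℝ} (hy : y = 0 ∨ y = 1) (a b : Fin M → Bool) :
    linkWeight y a b = if ((∃ m, a m = true ∧ b m = true) ↔ y = 1) then 1 else 0 := by
  rw [linkWeight, colDisj_eq]
  rcases hy with rfl | rfl <;> by_cases h : ∃ m, a m = true ∧ b m = true <;> simp [h]

instance bern_isFiniteMeasure (q : ℝ) : IsFiniteMeasure (bern q) := by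
  unfold bern
  exact ⟨by simp⟩

open Classical in
lemma Qabs_eq_sum (M n : ℕ) {q : ℝ} (hq : q ∈ Set.Ioo (0 : ℝ) 1) (x : ℕ → ℝ) :
    Qabs M n q x = ∑ ω : Fin M × Fin (n + 1) → Bool,
      (∏ p, bernMass q (ω p)) * if ω ∈ (cfg x : Set (Fin M × Fin (n + 1) → Bool)) then 1 else 0 := by
  have hω (ω : Fin M × Fin (n + 1) → Bool) :
      (lineμ M n q).real {ω} = ∏ p, bernMass q (ω p) := by
    rw [Measure.real, lineμ, Measure.pi_singleton, ENNReal.toReal_prod]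
    refine Finset.prod_congr rfl fun p _ => ?_
    rw [bern_singleton, ENNReal.toReal_ofReal (bernMass_nonneg hq _)]
  have : IsFiniteMeasure (lineμ M n q) := by unfold lineμ; infer_instance
  have hs := sum_measureReal_singleton (μ := lineμ M n q)
    (univ.filter (· ∈ (cfg x : Set (Fin M × Fin (n + 1) → Bool))))
  simp only [Finset.coe_filter, Finset.mem_univ, true_and, Set.ofPred_mem_eq] at hs
  rw [Qabs, ← Measure.real, ← hs, Finset.sum_filter]
  simp [hω]

lemma Qabs_eq_sum_cfgVec (M n : ℕ) {q : ℝ} (hq : q ∈ Set.Ioo (0 : ℝ) 1) (x : ℕ → ℝ)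
    (hx : ∀ j, 1 ≤ j → j ≤ n → (x j = 0 ∨ x j = 1)) :
    Qabs M n q x = ∑ b, cfgVec M q x n b := by
  classical
  have h := sum_columns_eq_sum_cfgVec M q x n (fun _ => 1)
  simp only [one_mul] at h
  rw [← h, Qabs_eq_sum M n hq]
  refine Fintype.sum_equiv ((Equiv.curry _ _ _).trans (Equiv.piComm _)) _ _ fun ω => ?_
  congr 1
  · rw [Fintype.prod_prod_type, Finset.prod_comm]
    rfl
  · rw [Finset.prod_congr rfl fun (j : Fin n) _ =>
      linkWeight_eq (hx (j.val + 1) (by omega) (by omega)) _ _, Finset.prod_ite_zero]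
    simp only [Finset.mem_univ, forall_const, Finset.prod_const_one]
    exact if_congr Iff.rfl rfl rfl

/-- `Q_{x^{(n)}} = ∑_{j=0}^n h_j Q_{0^{(n−j)}} ∏_{l=j+1}^n ((1−x_l)−x_l)`. -/
theorem stmt7 (M n : ℕ) (hM : 1 ≤ M) (hn : 1 ≤ n) (q : ℝ) (hq : q ∈ Set.Ioo (0 : ℝ) 1)
    (x : ℕ → ℝ) (hx : ∀ j, 1 ≤ j → j ≤ n → (x j = 0 ∨ x j = 1)) :
    Qabs M n q x
      = ∑ j ∈ Finset.range (n + 1),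
          hcoef M q x j * Q0a M q (n - j) *
            ∏ l ∈ Finset.Icc (j + 1) n, ((1 - x l) - x l) := by
  rw [Qabs_eq_sum_cfgVec M n hq x hx, sum_cfgVec, cfgSum]
end

section
/- Consider a sequence of M-layer models with non-identical layers on a fixed finite simple graph G = (V,E): for each M, the families {Y_{m,ℓ}} and {Z_{m,i}} are mutually independent Bernoulli with P[Y_{m,ℓ}=1] = p_{m,ℓ}(M) and P[Z_{m,i}=1] = q_{m,i}(M), W_{m,ℓ} = Y_{m,ℓ} Z_{m,i} Z_{m,j} for ℓ = (i,j), W_ℓ = Σ_{m=1}^M W_{m,ℓ}, and r_{m,ℓ} = p_{m,ℓ} q_{m,i} q_{m,j}. Assume that as M → ∞: (i) max_{1≤m≤M} r_{m,ℓ} → 0 for each ℓ ∈ E; (ii) Σ_{m=1}^M r_{m,ℓ} → λ_ℓ ∈ (0,∞) for each ℓ ∈ E; and (iii) for every pair of distinct links ℓ, ℓ' that share an endpoint, R_{ℓ,ℓ'} := Σ_{m=1}^M E[W_{m,ℓ} W_{m,ℓ'}] → 0. Then for every (w_ℓ)_{ℓ∈E} ∈ ℕ^E, lim_{M→∞} P[W_ℓ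 = w_ℓ for all ℓ ∈ E] = ∏_{ℓ∈E} λ_ℓ^{w_ℓ} e^{−λ_ℓ} / w_ℓ!. -/
open MeasureTheory Filter Finset

open scoped Classical

/-- The `M`-layer model with non-identical layers: the thinning and activation
probabilities `p m ℓ`, `q m i` may depend on the layer `m`. -/
noncomputable def netμ' (V : Type) [Fintype V] (M : ℕ)
    (p : ℕ → (V × V) → ℝ) (q : ℕ → V → ℝ) :
    Measure (((Fin M × (V × V)) ⊕ (Fin M × V)) → Bool) :=
  Measure.pi fun k =>
    bern (Sum.elim (fun a : Fin M × (V × V) => p a.1.val a.2)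
      (fun a : Fin M × V => q a.1.val a.2) k)

/-- Link `ℓ = (i,j)` exists on layer `m`: `W_{m,ℓ} = Y_{m,ℓ} Z_{m,i} Z_{m,j} = 1`. -/
def exOn {V : Type} {M : ℕ} (m : Fin M) (ℓ : V × V)
    (ω : ((Fin M × (V × V)) ⊕ (Fin M × V)) → Bool) : Prop :=
  ω (Sum.inl (m, ℓ)) = true ∧ ω (Sum.inr (m, ℓ.1)) = true ∧ ω (Sum.inr (m, ℓ.2)) = true

/-- `W_{m,ℓ}` as a real-valued (0/1) random variable. -/
noncomputable def Wlay {V : Type} {M : ℕ} (m : Fin M) (ℓ : V × V)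
    (ω : ((Fin M × (V × V)) ⊕ (Fin M × V)) → Bool) : ℝ :=
  if exOn m ℓ ω then 1 else 0

/-- `W_ℓ = Σ_m W_{m,ℓ}`: the number of layers on which link `ℓ` exists. -/
noncomputable def Wnum {V : Type} {M : ℕ} (ℓ : V × V)
    (ω : ((Fin M × (V × V)) ⊕ (Fin M × V)) → Bool) : ℕ :=
  (Finset.univ.filter fun m : Fin M => exOn m ℓ ω).card

/-- Two links share an endpoint. -/
def shares {V : Type} (ℓ ℓ' : V × V) : Prop :=
  ℓ.1 = ℓ'.1 ∨ ℓ.1 = ℓ'.2 ∨ ℓ.2 = ℓ'.1 ∨ ℓ.2 = ℓ'.2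

lemma abs_prod_sub_prod_le {ι : Type*} (s : Finset ι) (a b : ι → ℝ)
    (ha : ∀ i ∈ s, a i ∈ Set.Icc (0 : ℝ) 1) (hb : ∀ i ∈ s, b i ∈ Set.Icc (0 : ℝ) 1) :
    |∏ i ∈ s, a i - ∏ i ∈ s, b i| ≤ ∑ i ∈ s, |a i - b i| := by
  induction s using Finset.induction_on with
  | empty => simp
  | insert i s hi ih =>
    rw [prod_insert hi, prod_insert hi, sum_insert hi]
    have ih' := ih (fun j hj => ha j (mem_insert_of_mem hj)) fun j hj => hb j (mem_insert_of_mem hj)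
    have ha' := ha i (mem_insert_self i s)
    have hb0 : 0 ≤ ∏ j ∈ s, b j := prod_nonneg fun j hj => (hb j (mem_insert_of_mem hj)).1
    have hb1 : ∏ j ∈ s, b j ≤ 1 := prod_le_one (fun j hj => (hb j (mem_insert_of_mem hj)).1)
      fun j hj => (hb j (mem_insert_of_mem hj)).2
    calc |a i * ∏ j ∈ s, a j - b i * ∏ j ∈ s, b j|
        = |a i * (∏ j ∈ s, a j - ∏ j ∈ s, b j) + (a i - b i) * ∏ j ∈ s, b j| := by ring_nf
      _ ≤ |a i| * |∏ j ∈ s, a j - ∏ j ∈ s, b j| + |a i - b i| * |∏ j ∈ s, b j| := by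
          rw [← abs_mul, ← abs_mul]; exact abs_add_le _ _
      _ ≤ 1 * |∏ j ∈ s, a j - ∏ j ∈ s, b j| + |a i - b i| * 1 := by
          gcongr
          · rw [abs_of_nonneg ha'.1]; exact ha'.2
          · rw [abs_of_nonneg hb0]; exact hb1
      _ ≤ |a i - b i| + ∑ j ∈ s, |a j - b j| := by linarith

/-- Two events that agree off a third one have probabilities differing by at most its probability. -/
lemma abs_measureReal_sub_le {Ω : Type*} [MeasurableSpace Ω] {μ : Measure Ω} [IsFiniteMeasure μ]
    {S T U : Set Ω} (h : ∀ ω ∉ U, ω ∈ S ↔ ω ∈ T) : |μ.real S - μ.real T| ≤ μ.real U := by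
  have key : ∀ {S T : Set Ω}, (∀ ω ∉ U, ω ∈ S → ω ∈ T) → μ.real S - μ.real T ≤ μ.real U := by
    intro S T h
    have hsub : S ⊆ T ∪ U := fun ω hω => by
      by_cases hU : ω ∈ U
      · exact Or.inr hU
      · exact Or.inl (h ω hU hω)
    linarith [measureReal_mono (μ := μ) hsub, measureReal_union_le (μ := μ) T U]
  rw [abs_le]
  constructor
  · linarith [key fun ω hω => (h ω hω).2]
  · exact key fun ω hω => (h ω hω).1

/-- Sum over ordered pairs of distinct indices of the probabilities of pairwise intersections. -/
noncomputable def pairMass {Ω L : Type*} [MeasurableSpace Ω] (μ : Measure Ω) (E : Finset L)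
    (A : L → Set Ω) : ℝ :=
  ∑ ℓ ∈ E, ∑ ℓ' ∈ E.erase ℓ, μ.real (A ℓ ∩ A ℓ')

/-- Bonferroni bounds for the probability that no event occurs. -/
lemma measureReal_none_bounds {Ω L : Type*} [MeasurableSpace Ω] [DiscreteMeasurableSpace Ω]
    (μ : Measure Ω) [IsProbabilityMeasure μ] (E : Finset L) (A : L → Set Ω) :
    1 - ∑ ℓ ∈ E, μ.real (A ℓ) ≤ μ.real {ω | ∀ ℓ ∈ E, ω ∉ A ℓ} ∧
    μ.real {ω | ∀ ℓ ∈ E, ω ∉ A ℓ} ≤ 1 - ∑ ℓ ∈ E, μ.real (A ℓ) + pairMass μ E A := by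
  induction E using Finset.induction_on with
  | empty => simp [pairMass]
  | insert a s ha ih =>
    set N : Set Ω := {ω | ∀ ℓ ∈ s, ω ∉ A ℓ} with hN
    have hset : {ω | ∀ ℓ ∈ insert a s, ω ∉ A ℓ} = N \ A a := by
      ext ω; simp [hN, and_comm]
    have h1 : μ.real (N ∩ A a) + μ.real (N \ A a) = μ.real N :=
      measureReal_inter_add_sdiff (.of_discrete)
    have h2 : μ.real (N ∩ A a) ≤ μ.real (A a) := measureReal_mono Set.inter_subset_right
    have h3 : μ.real (A a) ≤ μ.real (N ∩ A a) + ∑ ℓ ∈ s, μ.real (A a ∩ A ℓ) := by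
      have hsub : A a ⊆ (N ∩ A a) ∪ ⋃ ℓ ∈ s, A a ∩ A ℓ := by
        intro ω hω
        by_cases h : ω ∈ N
        · exact Or.inl ⟨h, hω⟩
        · refine Or.inr ?_
          simp only [hN, Set.mem_ofPred_eq, not_forall, not_not] at h
          obtain ⟨ℓ, hℓ, h⟩ := h
          simp only [Set.mem_iUnion]
          exact ⟨ℓ, hℓ, hω, h⟩
      have := measureReal_mono (μ := μ) hsub
      have h' := measureReal_union_le (μ := μ) (N ∩ A a) (⋃ ℓ ∈ s, A a ∩ A ℓ)
      have h'' := measureReal_biUnion_finset_le (μ := μ) s fun ℓ => A a ∩ A ℓ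
      linarith
    have h4 : pairMass μ s A + ∑ ℓ ∈ s, μ.real (A a ∩ A ℓ) ≤ pairMass μ (insert a s) A := by
      unfold pairMass
      rw [sum_insert ha, erase_insert ha, add_comm]
      gcongr with ℓ hℓ
      exact subset_insert a s
    rw [hset, sum_insert ha]
    constructor <;> linarith [ih.1, ih.2]

lemma exp_neg_bounds {x : ℝ} (hx : 0 ≤ x) :
    1 - x ≤ Real.exp (-x) ∧ Real.exp (-x) ≤ 1 - x + x ^ 2 := by
  constructor
  · linarith [Real.add_one_le_exp (-x)]
  · have h := Real.add_one_le_exp x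
    have h1 : Real.exp (-x) * (1 + x) ≤ 1 := by
      calc Real.exp (-x) * (1 + x) ≤ Real.exp (-x) * Real.exp x := by gcongr; linarith
        _ = 1 := by rw [← Real.exp_add]; simp
    have h2 : (1 : ℝ) ≤ (1 - x + x ^ 2) * (1 + x) := by nlinarith [pow_nonneg hx 3]
    exact le_of_mul_le_mul_right (h1.trans h2) (by linarith)

section Layers

variable {Ω L ι : Type*}

/-- Number of layers in `s` on which `ℓ` is present. -/
noncomputable def layerCount (X : ι → Ω → L → Bool) (s : Finset ι) (ℓ : L) (ω : Ω) : ℕ :=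
  (s.filter fun m => X m ω ℓ = true).card

lemma layerCount_eq_zero_iff {X : ι → Ω → L → Bool} {s : Finset ι} {ℓ : L} {ω : Ω} :
    layerCount X s ℓ ω = 0 ↔ ∀ m ∈ s, ¬ X m ω ℓ = true := by
  simp [layerCount, filter_eq_empty_iff]

/-- Second-order error of the Poisson approximation: coincidences inside a layer, and squares of
the layer intensities. -/
noncomputable def layerError [MeasurableSpace Ω] (μ : Measure Ω) (E : Finset L)
    (X : ι → Ω → L → Bool) (s : Finset ι) : ℝ :=
  ∑ m ∈ s, (pairMass μ E (fun ℓ => {ω | X m ω ℓ = true}) +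
    (∑ ℓ ∈ E, μ.real {ω | X m ω ℓ = true}) ^ 2)

/-- Each layer is independent of any finite collection of other layers. -/
def IndepLayers [MeasurableSpace Ω] (μ : Measure Ω) (X : ι → Ω → L → Bool) : Prop :=
  ∀ (m : ι) (s : Finset ι), m ∉ s →
    ProbabilityTheory.IndepFun (X m) (fun ω (i : s) => X i ω) μ

variable [Fintype L] [MeasurableSpace Ω] {μ : Measure Ω} {X : ι → Ω → L → Bool}

lemma IndepLayers.measureReal_inter (hX : IndepLayers μ X) {m : ι} {s : Finset ι} (hm : m ∉ s)
    (S : Set (L → Bool)) (T : Set (s → L → Bool)) :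
    μ.real {ω | X m ω ∈ S ∧ (fun i : s => X i ω) ∈ T} =
      μ.real {ω | X m ω ∈ S} * μ.real {ω | (fun i : s => X i ω) ∈ T} := by
  have h := (hX m s hm).measure_inter_preimage_eq_mul S T .of_discrete .of_discrete
  have h' := congrArg ENNReal.toReal h
  rw [ENNReal.toReal_mul] at h'
  exact h'

variable [IsProbabilityMeasure μ]

lemma IndepLayers.measureReal_absent (hX : IndepLayers μ X) (E : Finset L) (s : Finset ι) :
    μ.real {ω | ∀ m ∈ s, ∀ ℓ ∈ E, ¬ X m ω ℓ = true} =
      ∏ m ∈ s, μ.real {ω | ∀ ℓ ∈ E, ¬ X m ω ℓ = true} := by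
  induction s using Finset.induction_on with
  | empty => simp
  | insert m s hm ih =>
    have h := hX.measureReal_inter hm {x | ∀ ℓ ∈ E, ¬ x ℓ = true}
      {y | ∀ i, ∀ ℓ ∈ E, ¬ y i ℓ = true}
    rw [prod_insert hm, ← ih]
    simpa only [Set.mem_ofPred_eq, forall_mem_insert, Subtype.forall] using h

variable [DiscreteMeasurableSpace Ω]

lemma IndepLayers.abs_void_sub_exp_le (hX : IndepLayers μ X) (E : Finset L) (s : Finset ι) :
    |μ.real {ω | ∀ ℓ ∈ E, layerCount X s ℓ ω = 0} -
      Real.exp (-∑ ℓ ∈ E, ∑ m ∈ s, μ.real {ω | X m ω ℓ = true})| ≤ layerError μ E X s := by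
  have hset : {ω | ∀ ℓ ∈ E, layerCount X s ℓ ω = 0} =
      {ω | ∀ m ∈ s, ∀ ℓ ∈ E, ¬ X m ω ℓ = true} := by
    ext ω
    simp only [layerCount_eq_zero_iff, Set.mem_ofPred_eq]
    exact ⟨fun h m hm ℓ hℓ => h ℓ hℓ m hm, fun h ℓ hℓ m hm => h m hm ℓ hℓ⟩
  rw [hset, hX.measureReal_absent, sum_comm, ← sum_neg_distrib, Real.exp_sum]
  have hnn : ∀ m, 0 ≤ ∑ ℓ ∈ E, μ.real {ω | X m ω ℓ = true} := fun m =>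
    sum_nonneg fun _ _ => measureReal_nonneg
  refine (abs_prod_sub_prod_le s _ _ (fun m _ => ⟨measureReal_nonneg, measureReal_le_one⟩)
    fun m _ => ⟨(Real.exp_pos _).le, Real.exp_le_one_iff.2 (by linarith [hnn m])⟩).trans ?_
  refine sum_le_sum fun m _ => ?_
  have h1 := measureReal_none_bounds μ E fun ℓ => {ω | X m ω ℓ = true}
  have h2 := exp_neg_bounds (hnn m)
  have h3 : 0 ≤ pairMass μ E fun ℓ => {ω | X m ω ℓ = true} :=
    sum_nonneg fun _ _ => sum_nonneg fun _ _ => measureReal_nonneg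
  simp only [Set.mem_ofPred_eq] at h1
  rw [abs_le]
  constructor <;> nlinarith [h1.1, h1.2, h2.1, h2.2]

/-- Layer-by-layer form of the Poisson recursion. -/
lemma IndepLayers.abs_sub_layer_le (hX : IndepLayers μ X) {E : Finset L} {s : Finset ι}
    {m : ι} (hm : m ∈ s) {ℓ : L} (hℓ : ℓ ∈ E) (u : L → ℕ) :
    |μ.real {ω | X m ω ℓ = true ∧
        ∀ ℓ' ∈ E, layerCount X s ℓ' ω = Function.update u ℓ (u ℓ + 1) ℓ'} -
      μ.real {ω | X m ω ℓ = true} * μ.real {ω | ∀ ℓ' ∈ E, layerCount X s ℓ' ω = u ℓ'}| ≤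
    pairMass μ E (fun ℓ => {ω | X m ω ℓ = true}) +
      (∑ ℓ ∈ E, μ.real {ω | X m ω ℓ = true}) ^ 2 := by
  set t := s.erase m
  have hmt : m ∉ t := notMem_erase m s
  have hcount : ∀ ℓ' ω, layerCount X s ℓ' ω =
      layerCount X t ℓ' ω + if X m ω ℓ' = true then 1 else 0 := by
    intro ℓ' ω
    rw [layerCount, ← insert_erase hm, filter_insert]
    split_ifs with h
    · rw [card_insert_of_notMem (by simp)]; rfl
    · rfl
  set r : L → ℝ := fun ℓ' => μ.real {ω | X m ω ℓ' = true}
  set Pt := μ.real {ω | ∀ ℓ' ∈ E, layerCount X t ℓ' ω = u ℓ'}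
  have hindep : μ.real {ω | X m ω ℓ = true ∧ ∀ ℓ' ∈ E, layerCount X t ℓ' ω = u ℓ'} =
      r ℓ * Pt := by
    have h := hX.measureReal_inter hmt {x | x ℓ = true}
      {y | ∀ ℓ' ∈ E, (univ.filter fun i => y i ℓ' = true).card = u ℓ'}
    have hc : ∀ ω ℓ', (univ.filter fun i : t => X i ω ℓ' = true).card =
        layerCount X t ℓ' ω := by
      intro ω ℓ'
      rw [layerCount, ← card_map (Function.Embedding.subtype _)]
      congr 1
      ext i
      simp only [Finset.mem_map, mem_filter, mem_univ, true_and, Function.Embedding.subtype_apply,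
        Subtype.exists, exists_and_left, exists_prop, and_comm, exists_eq_left]
    simpa only [Set.mem_ofPred_eq, hc] using h
  have hpair : ∑ ℓ' ∈ E.erase ℓ, μ.real ({ω | X m ω ℓ = true} ∩ {ω | X m ω ℓ' = true}) ≤
      pairMass μ E (fun ℓ => {ω | X m ω ℓ = true}) :=
    single_le_sum (f := fun ℓ => ∑ ℓ' ∈ E.erase ℓ,
      μ.real ({ω | X m ω ℓ = true} ∩ {ω | X m ω ℓ' = true}))
      (fun _ _ => sum_nonneg fun _ _ => measureReal_nonneg) hℓ
  have h1 : |μ.real {ω | X m ω ℓ = true ∧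
        ∀ ℓ' ∈ E, layerCount X s ℓ' ω = Function.update u ℓ (u ℓ + 1) ℓ'} - r ℓ * Pt| ≤
      pairMass μ E (fun ℓ => {ω | X m ω ℓ = true}) := by
    rw [← hindep]
    refine (abs_measureReal_sub_le (U := ⋃ ℓ' ∈ E.erase ℓ,
      {ω | X m ω ℓ = true} ∩ {ω | X m ω ℓ' = true}) ?_).trans
      ((measureReal_biUnion_finset_le _ _).trans hpair)
    intro ω hω
    simp only [Set.mem_iUnion, mem_erase, Set.mem_inter_iff, Set.mem_ofPred_eq, not_exists,
      not_and, and_imp] at hω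
    simp only [Set.mem_ofPred_eq]
    refine and_congr_right fun hmℓ => forall₂_congr fun ℓ' hℓ' => ?_
    rw [hcount]
    by_cases h : ℓ' = ℓ
    · subst h; simp [hmℓ]
    · simp [h, hω ℓ' h hℓ' hmℓ]
  have h2 : |Pt - μ.real {ω | ∀ ℓ' ∈ E, layerCount X s ℓ' ω = u ℓ'}| ≤ ∑ ℓ' ∈ E, r ℓ' := by
    refine (abs_measureReal_sub_le (U := ⋃ ℓ' ∈ E, {ω | X m ω ℓ' = true}) ?_).trans
      (measureReal_biUnion_finset_le _ _)
    intro ω hω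
    simp only [Set.mem_iUnion, Set.mem_ofPred_eq, not_exists] at hω
    simp only [Set.mem_ofPred_eq]
    refine forall₂_congr fun ℓ' hℓ' => ?_
    rw [hcount, if_neg (hω ℓ' hℓ'), add_zero]
  have hrℓ : r ℓ ≤ ∑ ℓ' ∈ E, r ℓ' :=
    single_le_sum (f := r) (fun _ _ => measureReal_nonneg) hℓ
  have hr0 : 0 ≤ r ℓ := measureReal_nonneg
  calc _ ≤ |μ.real {ω | X m ω ℓ = true ∧
        ∀ ℓ' ∈ E, layerCount X s ℓ' ω = Function.update u ℓ (u ℓ + 1) ℓ'} - r ℓ * Pt| +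
        |r ℓ * Pt - r ℓ * μ.real {ω | ∀ ℓ' ∈ E, layerCount X s ℓ' ω = u ℓ'}| :=
        abs_sub_le _ _ _
    _ ≤ _ := by
      rw [← mul_sub, abs_mul, abs_of_nonneg hr0, sq]
      gcongr

/-- Approximate Poisson recursion `(u ℓ + 1) P(N = u + e_ℓ) ≈ E[N ℓ] P(N = u)`. -/
lemma IndepLayers.abs_recursion_le (hX : IndepLayers μ X) {E : Finset L} (s : Finset ι)
    {ℓ : L} (hℓ : ℓ ∈ E) (u : L → ℕ) :
    |(u ℓ + 1 : ℝ) * μ.real {ω | ∀ ℓ' ∈ E,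
        layerCount X s ℓ' ω = Function.update u ℓ (u ℓ + 1) ℓ'} -
      (∑ m ∈ s, μ.real {ω | X m ω ℓ = true}) *
        μ.real {ω | ∀ ℓ' ∈ E, layerCount X s ℓ' ω = u ℓ'}| ≤ layerError μ E X s := by
  set S := {ω | ∀ ℓ' ∈ E, layerCount X s ℓ' ω = Function.update u ℓ (u ℓ + 1) ℓ'} with hS
  have hcount : (u ℓ + 1 : ℝ) * μ.real S = ∑ m ∈ s, μ.real {ω | X m ω ℓ = true ∧ ω ∈ S} := by
    have hint : ∀ T : Set Ω, μ.real T = ∫ ω, T.indicator (fun _ => (1 : ℝ)) ω ∂μ := fun T => by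
      rw [integral_indicator .of_discrete]; simp
    simp only [hint]
    rw [← integral_finsetSum _ fun m _ => (integrable_const (1 : ℝ)).indicator .of_discrete,
      ← integral_const_mul]
    congr 1 with ω
    by_cases h : ω ∈ S
    · have hc : layerCount X s ℓ ω = u ℓ + 1 := by simpa using h ℓ hℓ
      have hc' : ((s.filter fun m => X m ω ℓ = true).card : ℝ) = u ℓ + 1 := by
        exact_mod_cast hc
      simp [Set.indicator, h, ← hc']
    · simp [Set.indicator, h]
  rw [hcount, sum_mul, ← sum_sub_distrib]
  exact (abs_sum_le_sum_abs _ _).trans (sum_le_sum fun m hm => hX.abs_sub_layer_le hm hℓ u)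

end Layers

lemma tendsto_layerError {L : Type*} {Ω ι : ℕ → Type*} [∀ M, MeasurableSpace (Ω M)]
    {μ : ∀ M, Measure (Ω M)} {E : Finset L} {X : ∀ M, ι M → Ω M → L → Bool}
    {s : ∀ M, Finset (ι M)}
    (hpair : ∀ ℓ ∈ E, ∀ ℓ' ∈ E, ℓ ≠ ℓ' → Tendsto (fun M => ∑ m ∈ s M,
      (μ M).real ({ω | X M m ω ℓ = true} ∩ {ω | X M m ω ℓ' = true})) atTop (nhds 0))
    (hcross : ∀ ℓ ∈ E, ∀ ℓ' ∈ E, Tendsto (fun M => ∑ m ∈ s M,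
      (μ M).real {ω | X M m ω ℓ = true} * (μ M).real {ω | X M m ω ℓ' = true}) atTop (nhds 0)) :
    Tendsto (fun M => layerError (μ M) E (X M) (s M)) atTop (nhds 0) := by
  have h1 := tendsto_finsetSum E fun ℓ hℓ => tendsto_finsetSum (E.erase ℓ) fun ℓ' hℓ' =>
    hpair ℓ hℓ ℓ' (mem_of_mem_erase hℓ') (ne_of_mem_erase hℓ').symm
  have h2 := tendsto_finsetSum E fun ℓ hℓ => tendsto_finsetSum E (hcross ℓ hℓ)
  have h3 := h1.add h2
  simp only [sum_const_zero, add_zero] at h3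
  refine h3.congr fun M => ?_
  simp only [layerError, pairMass, sum_add_distrib, sq, sum_mul_sum]
  congr 1
  · exact (sum_comm.trans (sum_congr rfl fun ℓ _ => sum_comm)).symm
  · exact (sum_comm.trans (sum_congr rfl fun ℓ _ => sum_comm)).symm

lemma tendsto_of_abs_sub_le {f g e : ℕ → ℝ} {a : ℝ} (h : ∀ M, |f M - g M| ≤ e M)
    (he : Tendsto e atTop (nhds 0)) (hg : Tendsto g atTop (nhds a)) :
    Tendsto f atTop (nhds a) := by
  have hdiff : Tendsto (fun M => f M - g M) atTop (nhds 0) := squeeze_zero_norm h he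
  simpa using hdiff.add hg

/-- The Poisson recursion together with the void probability determines the limiting law. -/
lemma tendsto_poisson_of_recursion {L : Type*} {E : Finset L} {lam : L → ℝ}
    (P : ℕ → (L → ℕ) → ℝ)
    (hzero : ∀ w, (∀ ℓ ∈ E, w ℓ = 0) →
      Tendsto (fun M => P M w) atTop (nhds (Real.exp (-∑ ℓ ∈ E, lam ℓ))))
    (hrec : ∀ ℓ ∈ E, ∀ u : L → ℕ, ∀ a, Tendsto (fun M => P M u) atTop (nhds a) →
      Tendsto (fun M => (u ℓ + 1 : ℝ) * P M (Function.update u ℓ (u ℓ + 1))) atTop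
        (nhds (lam ℓ * a))) (w : L → ℕ) :
    Tendsto (fun M => P M w) atTop
      (nhds (∏ ℓ ∈ E, lam ℓ ^ w ℓ * Real.exp (-lam ℓ) / ((w ℓ).factorial : ℝ))) := by
  induction h : ∑ ℓ ∈ E, w ℓ generalizing w with
  | zero =>
    have hw : ∀ ℓ ∈ E, w ℓ = 0 := by simpa using h
    convert hzero w hw using 2
    rw [← sum_neg_distrib, Real.exp_sum]
    exact prod_congr rfl fun ℓ hℓ => by simp [hw ℓ hℓ]
  | succ n ih =>
    obtain ⟨ℓ, hℓ, hpos⟩ : ∃ ℓ ∈ E, w ℓ ≠ 0 := by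
      by_contra! hcon
      rw [sum_eq_zero hcon] at h
      omega
    obtain ⟨k, hk⟩ := Nat.exists_eq_succ_of_ne_zero hpos
    set u := Function.update w ℓ k with hu
    have huℓ : u ℓ = k := by simp [hu]
    have hne : ∀ ℓ' ∈ E.erase ℓ, u ℓ' = w ℓ' := fun ℓ' h' => by
      simp [hu, ne_of_mem_erase h']
    have hw : Function.update u ℓ (u ℓ + 1) = w := by
      rw [huℓ, hu, Function.update_idem, ← Nat.succ_eq_add_one, ← hk, Function.update_eq_self]
    have hsum : ∑ ℓ ∈ E, u ℓ = n := by
      rw [← add_sum_erase _ _ hℓ, hk, ← sum_congr rfl hne] at h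
      rw [← add_sum_erase _ _ hℓ, huℓ]
      simp only [Nat.succ_eq_add_one] at h
      linarith
    have ht := hrec ℓ hℓ u _ (ih u hsum)
    rw [hw, huℓ] at ht
    have hk0 : (k + 1 : ℝ) ≠ 0 := by positivity
    have ht' := ht.const_mul ((k + 1 : ℝ)⁻¹)
    simp only [inv_mul_cancel_left₀ hk0] at ht'
    convert ht' using 2
    rw [← mul_prod_erase _ _ hℓ, ← mul_prod_erase _ _ hℓ, huℓ, hk]
    rw [prod_congr rfl fun ℓ' h' => show lam ℓ' ^ u ℓ' * Real.exp (-lam ℓ') / (u ℓ').factorial =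
      lam ℓ' ^ w ℓ' * Real.exp (-lam ℓ') / (w ℓ').factorial by rw [hne ℓ' h'], Nat.succ_eq_add_one, Nat.factorial_succ]
    push_cast
    field_simp
    ring

lemma bern_isProbabilityMeasure {x : ℝ} (hx : x ∈ Set.Ioc (0 : ℝ) 1) :
    IsProbabilityMeasure (bern x) := by
  constructor
  simp only [bern, Measure.coe_add, Measure.coe_smul, Pi.add_apply, Pi.smul_apply, measure_univ,
    smul_eq_mul, mul_one]
  rw [← ENNReal.ofReal_add hx.1.le (by linarith [hx.2])]
  simp

lemma bern_singleton_true (x : ℝ) : bern x {true} = ENNReal.ofReal x := by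
  simp [bern]

/-- Under a product of Bernoulli measures, prescribed coordinates are all `true` with the product
of their success probabilities. -/
lemma pi_bern_real_forall_true {κ : Type*} [Fintype κ] {f : κ → ℝ}
    (hf : ∀ k, f k ∈ Set.Ioc (0 : ℝ) 1) (S : Finset κ) :
    (Measure.pi fun k => bern (f k)).real {ω | ∀ k ∈ S, ω k = true} = ∏ k ∈ S, f k := by
  have := fun k => bern_isProbabilityMeasure (hf k)
  have hset : {ω : κ → Bool | ∀ k ∈ S, ω k = true} =
      Set.univ.pi fun k => if k ∈ S then {true} else Set.univ := by
    ext ω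
    simp only [Set.mem_ofPred_eq, Set.mem_univ_pi]
    refine forall_congr' fun k => ?_
    by_cases hk : k ∈ S <;> simp [hk]
  rw [measureReal_def, hset, Measure.pi_pi, ENNReal.toReal_prod, ← prod_subset (subset_univ S)]
  · refine prod_congr rfl fun k hk => ?_
    rw [if_pos hk, bern_singleton_true, ENNReal.toReal_ofReal (hf k).1.le]
  · intro k _ hk
    rw [if_neg hk, measure_univ, ENNReal.toReal_one]

section Network

variable {V : Type} {M : ℕ}

/-- The links present on layer `m`. -/
def layerLinks (m : Fin M) (ω : ((Fin M × (V × V)) ⊕ (Fin M × V)) → Bool) (ℓ : V × V) : Bool :=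
  ω (Sum.inl (m, ℓ)) && (ω (Sum.inr (m, ℓ.1)) && ω (Sum.inr (m, ℓ.2)))

lemma exOn_iff_layerLinks {m : Fin M} {ℓ : V × V}
    {ω : ((Fin M × (V × V)) ⊕ (Fin M × V)) → Bool} : exOn m ℓ ω ↔ layerLinks m ω ℓ = true := by
  simp [exOn, layerLinks]

lemma Wnum_eq_layerCount (ℓ : V × V) (ω : ((Fin M × (V × V)) ⊕ (Fin M × V)) → Bool) :
    Wnum ℓ ω = layerCount layerLinks univ ℓ ω := by
  simp only [Wnum, layerCount, exOn_iff_layerLinks]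

/-- The coordinates that determine the presence of link `ℓ` on layer `m`. -/
noncomputable def linkCoords (m : Fin M) (ℓ : V × V) :
    Finset ((Fin M × (V × V)) ⊕ (Fin M × V)) :=
  {Sum.inl (m, ℓ), Sum.inr (m, ℓ.1), Sum.inr (m, ℓ.2)}

lemma layerLinks_eq_true_iff {m : Fin M} {ℓ : V × V}
    {ω : ((Fin M × (V × V)) ⊕ (Fin M × V)) → Bool} :
    layerLinks m ω ℓ = true ↔ ∀ k ∈ linkCoords m ℓ, ω k = true := by
  simp [layerLinks, linkCoords]

variable {p : ℕ → (V × V) → ℝ} {q : ℕ → V → ℝ}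

lemma prod_linkCoords (m : Fin M) {ℓ : V × V}
    (hℓ : ℓ.1 ≠ ℓ.2) :
    ∏ k ∈ linkCoords m ℓ, Sum.elim (fun a : Fin M × (V × V) => p a.1.val a.2)
      (fun a : Fin M × V => q a.1.val a.2) k = p m ℓ * q m ℓ.1 * q m ℓ.2 := by
  rw [linkCoords, prod_insert (by simp), prod_insert (by simp [hℓ]), prod_singleton]
  simp [mul_assoc]

lemma disjoint_linkCoords (m : Fin M) {ℓ ℓ' : V × V} (hne : ℓ ≠ ℓ') (h : ¬ shares ℓ ℓ') :
    Disjoint (linkCoords m ℓ) (linkCoords m ℓ') := by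
  simp only [shares, not_or] at h
  obtain ⟨h1, h2, h3, h4⟩ := h
  rw [Finset.disjoint_left]
  intro k hk hk'
  simp only [linkCoords, mem_insert, mem_singleton] at hk hk'
  rcases hk with rfl | rfl | rfl <;> simp_all

lemma sumElim_mem_Ioc (hp : ∀ m ℓ, p m ℓ ∈ Set.Ioc (0 : ℝ) 1)
    (hq : ∀ m i, q m i ∈ Set.Ioc (0 : ℝ) 1) (k : (Fin M × (V × V)) ⊕ (Fin M × V)) :
    Sum.elim (fun a : Fin M × (V × V) => p a.1.val a.2)
      (fun a : Fin M × V => q a.1.val a.2) k ∈ Set.Ioc (0 : ℝ) 1 := by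
  cases k
  · exact hp _ _
  · exact hq _ _

variable [Fintype V]

lemma netμ'_isProbabilityMeasure (hp : ∀ m ℓ, p m ℓ ∈ Set.Ioc (0 : ℝ) 1)
    (hq : ∀ m i, q m i ∈ Set.Ioc (0 : ℝ) 1) : IsProbabilityMeasure (netμ' V M p q) := by
  have := fun k => bern_isProbabilityMeasure (sumElim_mem_Ioc (M := M) hp hq k)
  unfold netμ'
  infer_instance

lemma netμ'_real_layerLinks (hp : ∀ m ℓ, p m ℓ ∈ Set.Ioc (0 : ℝ) 1)
    (hq : ∀ m i, q m i ∈ Set.Ioc (0 : ℝ) 1) (m : Fin M) {ℓ : V × V} (hℓ : ℓ.1 ≠ ℓ.2) :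
    (netμ' V M p q).real {ω | layerLinks m ω ℓ = true} = p m ℓ * q m ℓ.1 * q m ℓ.2 := by
  simp only [layerLinks_eq_true_iff, netμ']
  rw [pi_bern_real_forall_true (sumElim_mem_Ioc hp hq), prod_linkCoords m hℓ]

lemma netμ'_real_layerLinks_inter (hp : ∀ m ℓ, p m ℓ ∈ Set.Ioc (0 : ℝ) 1)
    (hq : ∀ m i, q m i ∈ Set.Ioc (0 : ℝ) 1) (m : Fin M) {ℓ ℓ' : V × V} (hℓ : ℓ.1 ≠ ℓ.2)
    (hℓ' : ℓ'.1 ≠ ℓ'.2) (hne : ℓ ≠ ℓ') (hsh : ¬ shares ℓ ℓ') :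
    (netμ' V M p q).real ({ω | layerLinks m ω ℓ = true} ∩ {ω | layerLinks m ω ℓ' = true}) =
      (p m ℓ * q m ℓ.1 * q m ℓ.2) * (p m ℓ' * q m ℓ'.1 * q m ℓ'.2) := by
  have hset : {ω | layerLinks m ω ℓ = true} ∩ {ω | layerLinks m ω ℓ' = true} =
      {ω | ∀ k ∈ linkCoords m ℓ ∪ linkCoords m ℓ', ω k = true} := by
    ext ω
    simp only [layerLinks_eq_true_iff, Set.mem_inter_iff, Set.mem_ofPred_eq, mem_union, or_imp,
      forall_and]
  rw [hset, netμ', pi_bern_real_forall_true (sumElim_mem_Ioc hp hq),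
    prod_union (disjoint_linkCoords m hne hsh), prod_linkCoords m hℓ, prod_linkCoords m hℓ']

lemma integral_Wlay_mul (m : Fin M) (ℓ ℓ' : V × V) :
    ∫ ω, Wlay m ℓ ω * Wlay m ℓ' ω ∂(netμ' V M p q) =
      (netμ' V M p q).real ({ω | layerLinks m ω ℓ = true} ∩ {ω | layerLinks m ω ℓ' = true}) := by
  have hfun : (fun ω => Wlay m ℓ ω * Wlay m ℓ' ω) =
      ({ω | layerLinks m ω ℓ = true} ∩ {ω | layerLinks m ω ℓ' = true}).indicator
        fun _ => (1 : ℝ) := by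
    ext ω
    by_cases h : layerLinks m ω ℓ = true <;> by_cases h' : layerLinks m ω ℓ' = true <;>
      simp [Wlay, exOn_iff_layerLinks, h, h']
  rw [hfun, integral_indicator .of_discrete]
  simp

lemma indepLayers_layerLinks (hp : ∀ m ℓ, p m ℓ ∈ Set.Ioc (0 : ℝ) 1)
    (hq : ∀ m i, q m i ∈ Set.Ioc (0 : ℝ) 1) : IndepLayers (netμ' V M p q) layerLinks := by
  intro m s hm
  have := fun k => bern_isProbabilityMeasure (sumElim_mem_Ioc (M := M) hp hq k)
  have hcoord := ProbabilityTheory.iIndepFun_pi (X := fun _ => id)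
    (μ := fun k => bern (Sum.elim (fun a : Fin M × (V × V) => p a.1.val a.2)
      (fun a : Fin M × V => q a.1.val a.2) k)) fun _ => aemeasurable_id
  let layer : (Fin M × (V × V)) ⊕ (Fin M × V) → Fin M := Sum.elim Prod.fst Prod.fst
  have hdisj : Disjoint (univ.filter fun k => layer k = m) (univ.filter fun k => layer k ∈ s) := by
    rw [Finset.disjoint_left]
    intro k hk hk'
    simp only [mem_filter, mem_univ, true_and] at hk hk'
    exact hm (hk ▸ hk')
  have h := hcoord.indepFun_finset _ _ hdisj fun k => measurable_pi_apply k
  exact h.comp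
    (φ := fun y ℓ => y ⟨Sum.inl (m, ℓ), by simp [layer]⟩ &&
      (y ⟨Sum.inr (m, ℓ.1), by simp [layer]⟩ && y ⟨Sum.inr (m, ℓ.2), by simp [layer]⟩))
    (ψ := fun y (i : s) ℓ => y ⟨Sum.inl (i, ℓ), by simp [layer]⟩ &&
      (y ⟨Sum.inr (i, ℓ.1), by simp [layer]⟩ && y ⟨Sum.inr (i, ℓ.2), by simp [layer]⟩))
    .of_discrete .of_discrete

end Network

/-- If the nonnegative triangular array `a` has vanishing maxima and `b` has convergent sums, then
the sums of products vanish. -/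
lemma tendsto_sum_mul_zero {a b : ℕ → ℕ → ℝ} {c : ℝ} (ha : ∀ M m, a M m ∈ Set.Icc (0 : ℝ) 1)
    (hb : ∀ M m, 0 ≤ b M m)
    (hmax : Tendsto (fun M : ℕ => ⨆ m ∈ Finset.range M, a M m) atTop (nhds 0))
    (hsum : Tendsto (fun M : ℕ => ∑ m ∈ Finset.range M, b M m) atTop (nhds c)) :
    Tendsto (fun M : ℕ => ∑ m ∈ Finset.range M, a M m * b M m) atTop (nhds 0) := by
  have hprod := hmax.mul hsum
  rw [zero_mul] at hprod
  refine squeeze_zero (fun M => sum_nonneg fun m _ => mul_nonneg (ha M m).1 (hb M m))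
    (fun M => ?_) hprod
  rw [mul_sum]
  refine sum_le_sum fun m hm => mul_le_mul_of_nonneg_right ?_ (hb M m)
  have hbdd : BddAbove (Set.range fun m => ⨆ _ : m ∈ Finset.range M, a M m) := by
    refine ⟨1, ?_⟩
    rintro _ ⟨m, rfl⟩
    exact Real.iSup_le (fun _ => (ha M m).2) zero_le_one
  refine le_trans ?_ (le_ciSup hbdd m)
  simp [hm]

/-- asymptotic independence with Poisson limits for non-identical layers,
under (i) `max_m r_{m,ℓ} → 0`, (ii) `Σ_m r_{m,ℓ} → λ_ℓ ∈ (0,∞)` and (iii)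
`R_{ℓ,ℓ'} = Σ_m E[W_{m,ℓ} W_{m,ℓ'}] → 0` for distinct links sharing an endpoint. -/
theorem stmt14 {V : Type} [Fintype V] [DecidableEq V] (E : Finset (V × V))
    (hE1 : ∀ ℓ ∈ E, ℓ.1 ≠ ℓ.2) (hE2 : ∀ ℓ ∈ E, (ℓ.2, ℓ.1) ∉ E)
    (p : ℕ → ℕ → (V × V) → ℝ) (q : ℕ → ℕ → V → ℝ)
    (hp : ∀ M m ℓ, p M m ℓ ∈ Set.Ioc (0 : ℝ) 1) (hq : ∀ M m i, q M m i ∈ Set.Ioc (0 : ℝ) 1)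
    (lam : (V × V) → ℝ) (hlam : ∀ ℓ ∈ E, 0 < lam ℓ)
    (hmax : ∀ ℓ ∈ E,
      Tendsto (fun M : ℕ => ⨆ m ∈ Finset.range M, p M m ℓ * q M m ℓ.1 * q M m ℓ.2)
        atTop (nhds 0))
    (hsum : ∀ ℓ ∈ E,
      Tendsto (fun M : ℕ => ∑ m ∈ Finset.range M, p M m ℓ * q M m ℓ.1 * q M m ℓ.2)
        atTop (nhds (lam ℓ)))
    (hcorr : ∀ ℓ ∈ E, ∀ ℓ' ∈ E, ℓ ≠ ℓ' → shares ℓ ℓ' →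
      Tendsto (fun M : ℕ =>
          ∑ m : Fin M, ∫ ω, Wlay m ℓ ω * Wlay m ℓ' ω ∂(netμ' V M (p M) (q M)))
        atTop (nhds 0))
    (w : (V × V) → ℕ) :
    Tendsto (fun M : ℕ =>
        ((netμ' V M (p M) (q M)) {ω | ∀ ℓ ∈ E, Wnum ℓ ω = w ℓ}).toReal) atTop
      (nhds (∏ ℓ ∈ E,
        lam ℓ ^ (w ℓ) * Real.exp (-lam ℓ) / ((w ℓ).factorial : ℝ))) := by
  set r : ℕ → (V × V) → ℕ → ℝ := fun M ℓ m => p M m ℓ * q M m ℓ.1 * q M m ℓ.2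
  have hr01 : ∀ M ℓ m, r M ℓ m ∈ Set.Icc (0 : ℝ) 1 := fun M ℓ m => by
    obtain ⟨h1, h1'⟩ := hp M m ℓ
    obtain ⟨h2, h2'⟩ := hq M m ℓ.1
    obtain ⟨h3, h3'⟩ := hq M m ℓ.2
    exact ⟨by positivity, mul_le_one₀ (mul_le_one₀ h1' h2.le h2') h3.le h3'⟩
  have hprob : ∀ M, IsProbabilityMeasure (netμ' V M (p M) (q M)) := fun M =>
    netμ'_isProbabilityMeasure (hp M) (hq M)
  have hindep : ∀ M, IndepLayers (netμ' V M (p M) (q M)) layerLinks := fun M =>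
    indepLayers_layerLinks (hp M) (hq M)
  have hmean : ∀ M, ∀ m : Fin M, ∀ ℓ ∈ E,
      (netμ' V M (p M) (q M)).real {ω | layerLinks m ω ℓ = true} = r M ℓ m :=
    fun M m ℓ hℓ => netμ'_real_layerLinks (hp M) (hq M) m (hE1 ℓ hℓ)
  have hsum' : ∀ ℓ ∈ E, Tendsto (fun M => ∑ m : Fin M,
      (netμ' V M (p M) (q M)).real {ω | layerLinks m ω ℓ = true}) atTop (nhds (lam ℓ)) := by
    intro ℓ hℓ
    refine (hsum ℓ hℓ).congr fun M => ?_
    rw [sum_congr rfl fun m _ => hmean M m ℓ hℓ, Fin.sum_univ_eq_sum_range (r M ℓ)]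
  have hcross : ∀ ℓ ∈ E, ∀ ℓ' ∈ E,
      Tendsto (fun M => ∑ m : Fin M, r M ℓ m * r M ℓ' m) atTop (nhds 0) := by
    intro ℓ hℓ ℓ' hℓ'
    refine (tendsto_sum_mul_zero (hr01 · ℓ) (fun M m => (hr01 M ℓ' m).1) (hmax ℓ hℓ)
      (hsum ℓ' hℓ')).congr fun M => ?_
    rw [Fin.sum_univ_eq_sum_range fun m => r M ℓ m * r M ℓ' m]
  have hpair : ∀ ℓ ∈ E, ∀ ℓ' ∈ E, ℓ ≠ ℓ' → Tendsto (fun M => ∑ m : Fin M,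
      (netμ' V M (p M) (q M)).real
        ({ω | layerLinks m ω ℓ = true} ∩ {ω | layerLinks m ω ℓ' = true})) atTop (nhds 0) := by
    intro ℓ hℓ ℓ' hℓ' hne
    by_cases hsh : shares ℓ ℓ'
    · simpa only [integral_Wlay_mul] using hcorr ℓ hℓ ℓ' hℓ' hne hsh
    · refine (hcross ℓ hℓ ℓ' hℓ').congr fun M => sum_congr rfl fun m _ => ?_
      rw [netμ'_real_layerLinks_inter (hp M) (hq M) m (hE1 ℓ hℓ) (hE1 ℓ' hℓ') hne hsh]
  have herr : Tendsto (fun M => layerError (netμ' V M (p M) (q M)) E layerLinks univ) atTop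
      (nhds 0) := by
    refine tendsto_layerError hpair fun ℓ hℓ ℓ' hℓ' => (hcross ℓ hℓ ℓ' hℓ').congr fun M => ?_
    exact sum_congr rfl fun m _ => by rw [hmean M m ℓ hℓ, hmean M m ℓ' hℓ']
  simp only [Wnum_eq_layerCount]
  refine tendsto_poisson_of_recursion
    (fun M w => (netμ' V M (p M) (q M)).real
      {ω | ∀ ℓ ∈ E, layerCount layerLinks univ ℓ ω = w ℓ}) ?_ ?_ w
  · intro w hw
    have hexp : Tendsto (fun M => Real.exp (-∑ ℓ ∈ E, ∑ m : Fin M,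
        (netμ' V M (p M) (q M)).real {ω | layerLinks m ω ℓ = true})) atTop
        (nhds (Real.exp (-∑ ℓ ∈ E, lam ℓ))) :=
      (Real.continuous_exp.tendsto _).comp (tendsto_finsetSum E hsum').neg
    refine (tendsto_of_abs_sub_le (fun M => (hindep M).abs_void_sub_exp_le E univ) herr
      hexp).congr fun M => ?_
    congr 1
    ext ω
    exact forall₂_congr fun ℓ hℓ => by rw [hw ℓ hℓ]
  · intro ℓ hℓ u a hu
    exact tendsto_of_abs_sub_le (fun M => (hindep M).abs_recursion_le univ hℓ u) herr
      ((hsum' ℓ hℓ).mul hu)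
end
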